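/- arXiv:1108.4501 — 3 statements merged into one kernel-verified Lean document; each statement's English description precedes it below -/
import Mathlib

section
/- Let F be a 3-CNF formula with clauses c_1,…,c_m over variables x_1,…,x_n, let t ≥ 4, and let y_1,…,y_t be Boolean variables disjoint from x_1,…,x_n. Let C_1 be the complete set of clauses on y_1,…,y_t with the all-negative clause (ȳ_1 ∨ … ∨ ȳ_t) removed, and let C_2 = {c_i ∨ ȳ_4 ∨ … ∨ ȳ_t : i ∈ [m]}. Then every truth assignment that satisfies all clauses of C_1 ∪ C_2 sets y_1,…,y_t all to true, and its restriction to x_1,…,x_n satisfies every clause of F. In particular, if C_1 ∪ C_2 is satisfiable then F is satisfiable. -/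
/-- Let `F` be a 3-CNF formula with clauses `c_1, …, c_m` over variables `x_1, …, x_n`
(encoded as `F : Fin m → Finset (Fin n) × (Fin n → Bool)`: clause `c_j` has nonempty
variable-index set `(F j).1` of size at most 3 and polarities `(F j).2`, `true` = positive
literal), let `t ≥ 4`, and let `y_1, …, y_t` be fresh Boolean variables, so truth assignments
for `C₁ ∪ C₂` are functions `a : Fin n ⊕ Fin t → Bool`.
* `C₁` is the complete set of clauses on `y_1, …, y_t` minus the all-negative clause:
  clauses are indexed by polarities `p : Fin t → Bool`, `p ≠ const false`, and `a`
  satisfies clause `p` iff `∃ i : Fin t, a (inr i) = p i`.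
* `C₂ = {c_j ∨ ȳ_4 ∨ … ∨ ȳ_t : j ∈ [m]}`: `a` satisfies the `j`-th clause iff it satisfies
  `c_j` on the `x`-variables or makes some `y_i` with `4 ≤ i ≤ t` false (indices of `Fin t`
  are 0-based, so `y_4, …, y_t` correspond to `3 ≤ (i : ℕ)`).
Every assignment `a` satisfying all clauses of `C₁ ∪ C₂` sets all of `y_1, …, y_t` to true
and its restriction to the `x`-variables satisfies every clause of `F`; in particular, if
`C₁ ∪ C₂` is satisfiable then `F` is satisfiable. -/
theorem satisfying_C1_C2_forces_F (n m t : ℕ) (ht : 4 ≤ t)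
    (F : Fin m → Finset (Fin n) × (Fin n → Bool))
    (hF3 : ∀ j, (F j).1.card ≤ 3) (hFne : ∀ j, (F j).1.Nonempty)
    (a : Fin n ⊕ Fin t → Bool)
    (hC1 : ∀ p : Fin t → Bool, p ≠ (fun _ => false) →
        ∃ i : Fin t, a (Sum.inr i) = p i)
    (hC2 : ∀ j : Fin m,
        (∃ i ∈ (F j).1, a (Sum.inl i) = (F j).2 i) ∨
        (∃ i : Fin t, 3 ≤ (i : ℕ) ∧ a (Sum.inr i) = false)) :
    (∀ i : Fin t, a (Sum.inr i) = true) ∧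
    (∀ j : Fin m, ∃ i ∈ (F j).1, (fun i' => a (Sum.inl i')) i = (F j).2 i) ∧
    (∃ x : Fin n → Bool, ∀ j : Fin m, ∃ i ∈ (F j).1, x i = (F j).2 i) := by
  have h1 : ∀ i : Fin t, a (Sum.inr i) = true := by
    intro k
    by_contra hk
    obtain ⟨i, hi⟩ := hC1 (fun i => !(a (Sum.inr i))) (by
      intro h
      have h2 := congrFun h k
      simp at h2
      exact hk h2)
    simp at hi
  have h2 : ∀ j : Fin m, ∃ i ∈ (F j).1, a (Sum.inl i) = (F j).2 i := by
    intro j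
    rcases hC2 j with h | ⟨i, _, hi⟩
    · exact h
    · rw [h1 i] at hi
      cases hi
  exact ⟨h1, h2, fun i => a (Sum.inl i), h2⟩
end

section
/- Let k ≥ 0 and r ≥ 1 be integers and let S be a system of m equations ∏_{i∈I_j} x_i = b_j (j ∈ [m]) over variables x_1,…,x_n ∈ {−1,1}, with b_j ∈ {−1,1}, positive integer weights w_j, the index sets I_j nonempty, pairwise distinct, and of size |I_j| ≤ r, and such that the characteristic vectors of I_1,…,I_m span F_2^n (equivalently, the m×n matrix A over F_2 with a_{ji} = 1 iff i ∈ I_j has rank n). If n ≥ (2k − 1)r + 1, then there exists x ∈ {−1,1}^n whose total satisfied weight is at least W/2 + k, where W = Σ_j w_j; i.e., the maximum excess of S is at least k. -/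
/-- The sign of an element of `ZMod 2`. -/
def sgnZ (a : ZMod 2) : ℤ := if a = 0 then 1 else -1

lemma sgnZ_add (a b : ZMod 2) : sgnZ (a + b) = sgnZ a * sgnZ b := by
  revert a b; decide

lemma sgnZ_zero : sgnZ 0 = 1 := rfl

lemma sgnZ_one : sgnZ 1 = -1 := rfl

lemma sgnZ_cases (a : ZMod 2) : sgnZ a = 1 ∨ sgnZ a = -1 := by
  revert a; decide

lemma sgnZ_sum {ι : Type*} (s : Finset ι) (f : ι → ZMod 2) :
    sgnZ (∑ i ∈ s, f i) = ∏ i ∈ s, sgnZ (f i) := by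
  classical
  induction s using Finset.induction_on with
  | empty => rfl
  | insert a s ha ih => rw [Finset.sum_insert ha, Finset.prod_insert ha, sgnZ_add, ih]

lemma zmod2_self_add {n : ℕ} (u : Fin n → ZMod 2) : u + u = 0 := by
  funext i
  exact CharTwo.add_self_eq_zero _

lemma zmod2_add_eq_zero {n : ℕ} (u v : Fin n → ZMod 2) : u + v = 0 ↔ u = v := by
  constructor
  · intro h
    have : u + v + v = v := by rw [h, zero_add]
    rwa [add_assoc, zmod2_self_add, add_zero] at this
  · rintro rfl
    exact zmod2_self_add u

lemma sum_shift {G : Type*} [AddCommGroup G] [Fintype G] (f : G → ℤ) (e : G) :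
    ∑ y : G, f y = ∑ y : G, f (y + e) :=
  (Equiv.sum_comp (Equiv.addRight e) f).symm

/-- Orthogonality of characters. -/
lemma sum_sgnZ_dot {n : ℕ} (u : Fin n → ZMod 2) :
    ∑ y : Fin n → ZMod 2, sgnZ (u ⬝ᵥ y) = if u = 0 then 2 ^ n else 0 := by
  split_ifs with h
  · subst h
    simp [sgnZ_zero, ZMod.card]
  · obtain ⟨i, hi⟩ := Function.ne_iff.mp h
    have hi1 : u i = 1 := by
      have : ∀ a : ZMod 2, a ≠ 0 → a = 1 := by decide
      exact this _ hi
    have key : ∑ y : Fin n → ZMod 2, sgnZ (u ⬝ᵥ y)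
        = ∑ y : Fin n → ZMod 2, sgnZ (u ⬝ᵥ (y + Pi.single i 1)) :=
      sum_shift _ _
    simp only [dotProduct_add, sgnZ_add, dotProduct_single, hi1, mul_one, sgnZ_one,
      Finset.sum_neg_distrib, mul_neg] at key
    omega

lemma sum_sgnZ_mul_prod {n m : ℕ} (v : Fin m → Fin n → ZMod 2) (b : Fin m → ℤ)
    (K : Finset (Fin m)) (u : Fin n → ZMod 2) :
    ∑ y : Fin n → ZMod 2, sgnZ (u ⬝ᵥ y) * ∏ j ∈ K, (1 + b j * sgnZ (v j ⬝ᵥ y))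
      = ∑ T ∈ K.powerset, (∏ j ∈ T, b j) * (if u = ∑ j ∈ T, v j then 2 ^ n else 0) := by
  have h1 : ∀ y : Fin n → ZMod 2,
      sgnZ (u ⬝ᵥ y) * ∏ j ∈ K, (1 + b j * sgnZ (v j ⬝ᵥ y))
      = ∑ T ∈ K.powerset, (∏ j ∈ T, b j) * sgnZ ((u + ∑ j ∈ T, v j) ⬝ᵥ y) := by
    intro y
    rw [Finset.prod_one_add, Finset.mul_sum]
    refine Finset.sum_congr rfl fun T _ => ?_
    rw [add_dotProduct, sum_dotProduct, sgnZ_add, sgnZ_sum, Finset.prod_mul_distrib]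
    ring
  simp only [h1]
  rw [Finset.sum_comm]
  refine Finset.sum_congr rfl fun T _ => ?_
  rw [← Finset.mul_sum, sum_sgnZ_dot]
  simp only [zmod2_add_eq_zero]

/-- A minimal representation of the all-ones vector. -/
lemma exists_min_rep {n m : ℕ} (v : Fin m → Fin n → ZMod 2)
    (hspan : Submodule.span (ZMod 2) (Set.range v) = ⊤) (u : Fin n → ZMod 2) :
    ∃ K : Finset (Fin m), ∑ j ∈ K, v j = u ∧
      ∀ K' : Finset (Fin m), ∑ j ∈ K', v j = u → K.card ≤ K'.card := by
  have hex : ∃ K : Finset (Fin m), ∑ j ∈ K, v j = u := by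
    have hu : u ∈ Submodule.span (ZMod 2) (Set.range v) := by rw [hspan]; trivial
    obtain ⟨c, hc⟩ := (Submodule.mem_span_range_iff_exists_fun (ZMod 2)).mp hu
    refine ⟨Finset.univ.filter (fun j => c j ≠ 0), ?_⟩
    rw [← hc, Finset.sum_filter]
    refine Finset.sum_congr rfl fun j _ => ?_
    split_ifs with h
    · have : ∀ a : ZMod 2, a ≠ 0 → a = 1 := by decide
      rw [this _ h, one_smul]
    · push Not at h
      rw [h, zero_smul]
  have hne : (Finset.univ.filter (fun K : Finset (Fin m) => ∑ j ∈ K, v j = u)).Nonempty := by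
    obtain ⟨K, hK⟩ := hex
    exact ⟨K, by simpa using hK⟩
  obtain ⟨K, hK, hmin⟩ := Finset.exists_min_image _ Finset.card hne
  refine ⟨K, by simpa using hK, fun K' hK' => hmin K' (by simpa using hK')⟩

lemma min_rep_indep {n m : ℕ} (v : Fin m → Fin n → ZMod 2) (u : Fin n → ZMod 2)
    (K : Finset (Fin m)) (hK : ∑ j ∈ K, v j = u)
    (hmin : ∀ K' : Finset (Fin m), ∑ j ∈ K', v j = u → K.card ≤ K'.card)
    (T : Finset (Fin m)) (hT : T ⊆ K) (h0 : 0 = ∑ j ∈ T, v j) : T = ∅ := by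
  have h1 := Finset.sum_sdiff (f := v) hT
  rw [← h0, add_zero, hK] at h1
  have h2 := hmin _ h1
  have h3 := Finset.card_sdiff_add_card_eq_card hT
  exact Finset.card_eq_zero.mp (by omega)

lemma min_rep_sumfree {n m : ℕ} (v : Fin m → Fin n → ZMod 2) (u : Fin n → ZMod 2)
    (hinj : Function.Injective v) (hv0 : ∀ j, v j ≠ 0)
    (K : Finset (Fin m)) (hK : ∑ j ∈ K, v j = u)
    (hmin : ∀ K' : Finset (Fin m), ∑ j ∈ K', v j = u → K.card ≤ K'.card)
    (T : Finset (Fin m)) (hT : T ⊆ K) (j : Fin m) (h0 : v j = ∑ i ∈ T, v i) : T = {j} := by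
  have h1 := Finset.sum_sdiff (f := v) hT
  rw [← h0, hK] at h1
  have h3 := Finset.card_sdiff_add_card_eq_card hT
  have hle : T.card ≤ 1 := by
    by_cases hj : j ∈ K \ T
    · rw [← Finset.sum_erase_add _ _ hj, add_assoc, zmod2_self_add, add_zero] at h1
      have h2 := hmin _ h1
      have h4 := Finset.card_erase_lt_of_mem hj
      omega
    · rw [add_comm, ← Finset.sum_insert hj] at h1
      have h2 := hmin _ h1
      rw [Finset.card_insert_of_notMem hj] at h2
      omega
  rcases Nat.le_one_iff_eq_zero_or_eq_one.mp hle with h | h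
  · rw [Finset.card_eq_zero] at h
    subst h
    exact absurd (by simpa using h0) (hv0 j)
  · obtain ⟨i, rfl⟩ := Finset.card_eq_one.mp h
    rw [Finset.sum_singleton] at h0
    rw [hinj h0]

lemma exists_large_value {n m : ℕ} (v : Fin m → Fin n → ZMod 2)
    (b : Fin m → ℤ) (hb : ∀ j, b j = 1 ∨ b j = -1)
    (w : Fin m → ℕ) (hw : ∀ j, 0 < w j) (K : Finset (Fin m))
    (hind : ∀ T ⊆ K, 0 = ∑ j ∈ T, v j → T = ∅)
    (hsf : ∀ T ⊆ K, ∀ j, v j = ∑ i ∈ T, v i → T = {j}) :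
    ∃ y : Fin n → ZMod 2, (K.card : ℤ) ≤ ∑ j, (w j : ℤ) * b j * sgnZ (v j ⬝ᵥ y) := by
  by_contra! hcon
  set P : (Fin n → ZMod 2) → ℤ := fun y => ∏ j ∈ K, (1 + b j * sgnZ (v j ⬝ᵥ y)) with hP
  have hP0 : ∀ y, 0 ≤ P y := by
    intro y
    refine Finset.prod_nonneg fun j _ => ?_
    rcases hb j with h | h <;> rcases sgnZ_cases (v j ⬝ᵥ y) with h' | h' <;> rw [h, h'] <;> norm_num
  have hPs : ∑ y, P y = 2 ^ n := by
    have h := sum_sgnZ_mul_prod v b K 0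
    simp only [zero_dotProduct, sgnZ_zero, one_mul] at h
    rw [hP, h, Finset.sum_eq_single ∅]
    · simp
    · intro T hT hne
      rw [if_neg (fun h0 => hne (hind T (Finset.mem_powerset.mp hT) h0)), mul_zero]
    · simp
  have hPj : ∀ j, ∑ y, sgnZ (v j ⬝ᵥ y) * P y = if j ∈ K then b j * 2 ^ n else 0 := by
    intro j
    rw [hP, sum_sgnZ_mul_prod v b K (v j)]
    split_ifs with hj
    · rw [Finset.sum_eq_single {j}]
      · simp
      · intro T hT hne
        rw [if_neg (fun h0 => hne (hsf T (Finset.mem_powerset.mp hT) j h0)), mul_zero]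
      · intro h
        exact absurd (by simpa using hj) h
    · refine Finset.sum_eq_zero fun T hT => ?_
      rw [if_neg, mul_zero]
      intro h0
      have hT' := Finset.mem_powerset.mp hT
      have := hsf T hT' j h0
      subst this
      exact hj (by simpa using hT')
  have hF : ∑ y, (∑ j, (w j : ℤ) * b j * sgnZ (v j ⬝ᵥ y)) * P y
      = (∑ j ∈ K, (w j : ℤ)) * 2 ^ n := by
    simp only [Finset.sum_mul]
    rw [Finset.sum_comm]
    have : ∀ j, ∑ y, (w j : ℤ) * b j * sgnZ (v j ⬝ᵥ y) * P y
        = if j ∈ K then (w j : ℤ) * 2 ^ n else 0 := by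
      intro j
      simp only [mul_assoc]
      rw [← Finset.mul_sum, ← Finset.mul_sum, hPj]
      split_ifs
      · rcases hb j with h | h <;> rw [h] <;> ring
      · simp
    simp only [this]
    simp
  have hle : ∑ y, (∑ j, (w j : ℤ) * b j * sgnZ (v j ⬝ᵥ y)) * P y
      ≤ ∑ y, ((K.card : ℤ) - 1) * P y :=
    Finset.sum_le_sum fun y _ =>
      mul_le_mul_of_nonneg_right (by have := hcon y; omega) (hP0 y)
  rw [hF, ← Finset.mul_sum, hPs] at hle
  have h2 : (0 : ℤ) < 2 ^ n := by positivity
  have h3 := le_of_mul_le_mul_right hle h2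
  have h4 : (K.card : ℤ) ≤ ∑ j ∈ K, (w j : ℤ) := by
    have := Finset.card_nsmul_le_sum K (fun j => (w j : ℤ)) 1
      (fun j _ => by have := hw j; omega)
    simpa using this
  omega


/-- Theorem (Crowston et al.).  Let `k ≥ 0` and `r ≥ 1` be integers and let `S` be a system
of `m` equations `∏_{i ∈ I_j} x_i = b_j` over `{−1,1}`-variables `x_1, …, x_n` with
`b j ∈ {−1,1}`, positive integer weights `w j`, nonempty pairwise distinct index sets
`I j` of size at most `r`, and such that the characteristic vectors of `I_1, …, I_m`
span `F₂ⁿ` (equivalently, the `m × n` matrix over `F₂` with `a_{ji} = 1` iff `i ∈ I_j`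
has rank `n`, i.e. `S` is reduced under Rules 1 and 2).  If `n ≥ (2k − 1)r + 1`, then
there exists an assignment `x ∈ {−1,1}ⁿ` whose total satisfied weight is at least
`W/2 + k`, where `W = Σ_j w_j`; i.e. the maximum excess of `S` is at least `k`. -/
theorem reduced_system_excess_ge (n m r k : ℕ) (hr : 1 ≤ r)
    (I : Fin m → Finset (Fin n)) (hne : ∀ j, (I j).Nonempty)
    (hsize : ∀ j, (I j).card ≤ r)
    (hdist : Function.Injective I)
    (b : Fin m → ℤ) (hb : ∀ j, b j = 1 ∨ b j = -1)
    (w : Fin m → ℕ) (hw : ∀ j, 0 < w j)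
    (hspan : Submodule.span (ZMod 2)
        (Set.range (fun j : Fin m => fun i : Fin n => (if i ∈ I j then 1 else 0 : ZMod 2)))
      = ⊤)
    (hn : (2 * (k : ℤ) - 1) * (r : ℤ) + 1 ≤ (n : ℤ)) :
    ∃ x : Fin n → ℤ, (∀ i, x i = 1 ∨ x i = -1) ∧
      (∑ j : Fin m, (w j : ℚ)) / 2 + (k : ℚ)
        ≤ ∑ j ∈ Finset.univ.filter (fun j : Fin m => (∏ i ∈ I j, x i) = b j), (w j : ℚ) := by
  classical
  set v : Fin m → Fin n → ZMod 2 := fun j => fun i => (if i ∈ I j then 1 else 0 : ZMod 2) with hv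
  have hmem : ∀ j i, v j i ≠ 0 ↔ i ∈ I j := by
    intro j i
    simp [hv]
  have hv0 : ∀ j, v j ≠ 0 := by
    intro j h
    obtain ⟨i, hi⟩ := hne j
    exact (hmem j i).mpr hi (by rw [h]; rfl)
  have hinj : Function.Injective v := by
    intro j j' h
    apply hdist
    ext i
    rw [← hmem, ← hmem, h]
  obtain ⟨K, hK, hmin⟩ := exists_min_rep v hspan 1
  have hcard : n ≤ K.card * r := by
    have hcov : (Finset.univ : Finset (Fin n)) ⊆ K.biUnion I := by
      intro i _
      have h1 : ∑ j ∈ K, v j i ≠ 0 := by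
        rw [← Finset.sum_apply, hK]
        simp
      obtain ⟨j, hj, hji⟩ := Finset.exists_ne_zero_of_sum_ne_zero h1
      exact Finset.mem_biUnion.mpr ⟨j, hj, (hmem j i).mp hji⟩
    have h2 := Finset.card_le_card hcov
    rw [Finset.card_univ, Fintype.card_fin] at h2
    exact h2.trans (Finset.card_biUnion_le_card_mul _ _ _ fun j _ => hsize j)
  have hKk : 2 * (k : ℤ) ≤ K.card := by
    by_contra! hlt
    have h1 : (n : ℤ) ≤ K.card * r := by exact_mod_cast hcard
    have h2 : (K.card : ℤ) * r ≤ (2 * (k : ℤ) - 1) * r :=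
      mul_le_mul_of_nonneg_right (by omega) (by positivity)
    omega
  obtain ⟨y, hy⟩ := exists_large_value v b hb w hw K
    (fun T hT h => min_rep_indep v 1 K hK hmin T hT h)
    (fun T hT j h => min_rep_sumfree v 1 hinj hv0 K hK hmin T hT j h)
  refine ⟨fun i => sgnZ (y i), fun i => sgnZ_cases _, ?_⟩
  have hprod : ∀ j, ∏ i ∈ I j, sgnZ (y i) = sgnZ (v j ⬝ᵥ y) := by
    intro j
    rw [← sgnZ_sum]
    congr 1
    simp [dotProduct, hv, Finset.sum_ite_mem]
  simp only [hprod]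
  rw [Finset.sum_filter]
  have hterm : ∀ j, (if sgnZ (v j ⬝ᵥ y) = b j then (w j : ℚ) else 0)
      = (w j : ℚ) / 2 + (((w j : ℤ) * b j * sgnZ (v j ⬝ᵥ y) : ℤ) : ℚ) / 2 := by
    intro j
    rcases hb j with h | h <;> rcases sgnZ_cases (v j ⬝ᵥ y) with h' | h' <;> rw [h, h'] <;>
      push_cast <;> norm_num <;> ring
  simp only [hterm]
  rw [Finset.sum_add_distrib, ← Finset.sum_div, ← Finset.sum_div, ← Int.cast_sum]
  have h5 : ((2 * (k : ℤ) : ℤ) : ℚ)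
      ≤ ((∑ j, (w j : ℤ) * b j * sgnZ (v j ⬝ᵥ y) : ℤ) : ℚ) := by
    exact_mod_cast hKk.trans hy
  push_cast at h5 ⊢
  linarith
end

section
/- Let F be a CNF formula with clauses c_1,…,c_m over variables x_1,…,x_n, where clause c_j has r_j literals over pairwise distinct variables, let r ≥ max_j r_j, and let H(x) = Σ_{j=1}^m 2^{r−r_j} [1 − ∏_{i∈var(c_j)} (1 + d_{ij} x_i)] with d_{ij} = 1 if x_i ∈ c_j and d_{ij} = −1 if x̄_i ∈ c_j (true encoded as −1, false as 1). Then for every integer k ≥ 0, there exists a truth assignment satisfying at least asat(F) + k clauses of F if and only if there exists x ∈ {−1,1}^n with H(x) ≥ k·2^r. -/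
/-- Let `F` be a CNF formula with clauses `c_1, …, c_m` over variables `x_1, …, x_n`,
encoded as `F : Fin m → Finset (Fin n) × (Fin n → Bool)`: clause `c_j` has nonempty
variable-index set `var(c_j) = (F j).1` with `r_j = (F j).1.card` literals, and polarities
`(F j).2` (`true` meaning `x_i ∈ c_j`, i.e. `d_{ij} = 1`; `false` meaning `x̄_i ∈ c_j`,
i.e. `d_{ij} = -1`); let `r ≥ max_j r_j`.  Truth values are encoded in `{−1,1}` with `−1`
standing for true and `1` for false, so a truth assignment is `x : Fin n → ℤ` with
`x i ∈ {−1,1}`, and `x` satisfies `c_j` iff `∃ i ∈ (F j).1, x i = (if (F j).2 i then -1 else 1)`.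
With `H(x) = Σ_j 2^{r−r_j} (1 − ∏_{i ∈ var(c_j)} (1 + d_{ij} x_i))` and
`asat(F) = Σ_j (1 − 2^{−r_j})`: for every integer `k ≥ 0`, there exists a truth assignment
satisfying at least `asat(F) + k` clauses of `F` iff there exists `x ∈ {−1,1}ⁿ` with
`H(x) ≥ k · 2^r`. -/
theorem asat_plus_k_iff_H_ge (n m r : ℕ)
    (F : Fin m → Finset (Fin n) × (Fin n → Bool))
    (hne : ∀ j, (F j).1.Nonempty) (hr : ∀ j, (F j).1.card ≤ r) :
    ∀ k : ℕ,
      ((∃ x : Fin n → ℤ, (∀ i, x i = 1 ∨ x i = -1) ∧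
          (∑ j : Fin m, (1 - (2 : ℚ) ^ (-((F j).1.card : ℤ)))) + (k : ℚ)
            ≤ ((Finset.univ.filter
                (fun j : Fin m =>
                  ∃ i ∈ (F j).1, x i = (if (F j).2 i then -1 else 1))).card : ℚ))
        ↔ (∃ x : Fin n → ℤ, (∀ i, x i = 1 ∨ x i = -1) ∧
            (k : ℚ) * 2 ^ r
              ≤ ∑ j : Fin m, (2 : ℚ) ^ (r - (F j).1.card)
                  * (1 - ∏ i ∈ (F j).1,
                      (1 + (if (F j).2 i then (1 : ℚ) else -1) * (x i : ℚ))))) := by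
  intro k
  refine exists_congr fun x => and_congr_right fun hx => ?_
  have key : ∀ j : Fin m, (2 : ℚ) ^ (r - (F j).1.card)
      * (1 - ∏ i ∈ (F j).1, (1 + (if (F j).2 i then (1 : ℚ) else -1) * (x i : ℚ)))
      = 2 ^ r * ((if ∃ i ∈ (F j).1, x i = (if (F j).2 i then -1 else 1) then (1 : ℚ) else 0)
        - (1 - (2 : ℚ) ^ (-((F j).1.card : ℤ)))) := by
    intro j
    have hpow : (2 : ℚ) ^ r = 2 ^ (r - (F j).1.card) * 2 ^ (F j).1.card := by
      rw [← pow_add, Nat.sub_add_cancel (hr j)]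
    rw [hpow, zpow_neg, zpow_natCast]
    have h2 : (2 : ℚ) ^ (F j).1.card ≠ 0 := by positivity
    by_cases h : ∃ i ∈ (F j).1, x i = (if (F j).2 i then -1 else 1)
    · rw [if_pos h]
      obtain ⟨i, hi, hxi⟩ := h
      rw [Finset.prod_eq_zero hi (by rw [hxi]; split_ifs <;> norm_num)]
      field_simp
      ring
    · rw [if_neg h]
      push Not at h
      have hp : ∏ i ∈ (F j).1, (1 + (if (F j).2 i then (1 : ℚ) else -1) * (x i : ℚ))
          = 2 ^ (F j).1.card := by
        apply Finset.prod_eq_pow_card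
        intro i hi
        have h1 := h i hi
        rcases hx i with h3 | h3 <;> rw [h3] at h1 ⊢ <;> split_ifs at h1 ⊢ <;>
          first | exact absurd rfl h1 | norm_num
      rw [hp]
      field_simp
      ring
  rw [Finset.sum_congr rfl fun j _ => key j, ← Finset.mul_sum, Finset.sum_sub_distrib,
    Finset.sum_sub_distrib, Finset.sum_sub_distrib,
    Finset.sum_boole, mul_comm (k : ℚ), mul_le_mul_iff_right₀ (by positivity), le_sub_iff_add_le,
    add_comm]
end
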